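/- Let π' be the twin policy of a weak unichain policy for 𝔅_n. Then every improving switch for π' in 𝔇_n is of the form (x_{v,w}, y_{v,w}) for some edge (v,w) of 𝔅_n. -/

import Mathlib

/-! ## The Markov decision process `𝔅_n` -/

/-- Vertices of the MDP `𝔅_n`: a transportation vertex `t`, a sink `s`, a dummy vertex `d`,
and vertices `a i`, `b i` for `i ∈ {1,…,n}`. -/
inductive BV : Type where
  | t : BV
  | s : BV
  | d : BV
  | a : ℕ → BV
  | b : ℕ → BV
deriving DecidableEq

/-- The vertex `a i` for `i ∈ {1,…,n+1}`, with the convention `a (n+1) = s`. -/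
def aN (n i : ℕ) : BV := if i = n + 1 then BV.s else BV.a i

/-- The vertex `b i` for `i ∈ {1,…,n+1}`, with the convention `b (n+1) = d`. -/
def bN (n i : ℕ) : BV := if i = n + 1 then BV.d else BV.b i

/-- The vertex set of `𝔅_n`. -/
def IsBVertex (n : ℕ) : BV → Prop
  | BV.t => True
  | BV.s => True
  | BV.d => True
  | BV.a i => 1 ≤ i ∧ i ≤ n
  | BV.b i => 1 ≤ i ∧ i ≤ n

/-- The edge relation of `𝔅_n`: travel, enter, skip, board, stay, leave edges,
the edge `(d,s)` and the self-loop `(s,s)`. -/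
def BEdge (n : ℕ) (u v : BV) : Prop :=
  (∃ i, 1 ≤ i ∧ i ≤ n ∧ u = BV.t ∧ v = BV.a i) ∨
  (∃ i, 1 ≤ i ∧ i ≤ n ∧ u = BV.a i ∧ v = BV.b i) ∨
  (∃ i, 1 ≤ i ∧ i ≤ n ∧ u = BV.a i ∧ v = aN n (i + 1)) ∨
  (∃ i, 1 ≤ i ∧ i ≤ n ∧ u = BV.a i ∧ v = BV.t) ∨
  (∃ i, 1 ≤ i ∧ i ≤ n ∧ u = BV.b i ∧ v = bN n (i + 1)) ∨
  (∃ i, 1 ≤ i ∧ i ≤ n ∧ u = BV.b i ∧ v = aN n (i + 1)) ∨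
  (u = BV.d ∧ v = BV.s) ∨ (u = BV.s ∧ v = BV.s)

/-- The reward function of `𝔅_n`: `r(enter i) = 2^i`, `r(stay i) = 3/4`,
`r(board i) = -2^i + 5/4`, and reward `0` on all other edges. -/
def rB (n : ℕ) (u v : BV) : ℚ :=
  match u, v with
  | BV.a i, BV.b j => if i = j then 2 ^ i else 0
  | BV.a i, BV.t => -(2 ^ i) + 5 / 4
  | BV.b i, BV.b j => if j = i + 1 then 3 / 4 else 0
  | BV.b i, BV.d => if i = n then 3 / 4 else 0
  | _, _ => 0

/-- A policy for `𝔅_n` chooses an outgoing edge at every vertex. -/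
def IsBPolicy (n : ℕ) (π : BV → BV) : Prop := ∀ u, IsBVertex n u → BEdge n u (π u)

/-- A policy is weak unichain if it reaches the sink `s` from every vertex. -/
def BWeakUnichain (n : ℕ) (π : BV → BV) : Prop :=
  ∀ u, IsBVertex n u → ∃ k, π^[k] u = BV.s

open Classical in
/-- The value of a vertex `v` w.r.t. a (weak unichain) policy `π`:
the sum of the rewards along the path that `π` takes from `v` to the sink `s`. -/
noncomputable def BVal (n : ℕ) (π : BV → BV) (v : BV) : ℚ :=
  if h : ∃ k, π^[k] v = BV.s then
    ∑ i ∈ Finset.range (Nat.find h), rB n (π^[i] v) (π^[i + 1] v)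
  else 0

/-- The reduced costs of the edge `(u,v)` w.r.t. the policy `π`. -/
noncomputable def zB (n : ℕ) (π : BV → BV) (u v : BV) : ℚ :=
  rB n u v + BVal n π v - BVal n π u

/-- The edge `(u,v)` is an improving switch for `π` if its reduced costs are positive. -/
def BImproving (n : ℕ) (π : BV → BV) (u v : BV) : Prop :=
  BEdge n u v ∧ 0 < zB n π u v

/-- The Bland numbering `𝒩_{𝔅_n}` of the edges of `𝔅_n`. -/
def NB (n : ℕ) (u v : BV) : ℕ :=
  match u, v with
  | BV.t, BV.a i => i
  | BV.a i, BV.b _ => n + 1 + 5 * (i - 1)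
  | BV.a i, BV.a _ => n + 2 + 5 * (i - 1)
  | BV.a i, BV.s => n + 2 + 5 * (i - 1)
  | BV.a i, BV.t => n + 3 + 5 * (i - 1)
  | BV.b i, BV.b _ => n + 4 + 5 * (i - 1)
  | BV.b i, BV.d => n + 4 + 5 * (i - 1)
  | BV.b i, BV.a _ => n + 5 + 5 * (i - 1)
  | BV.b i, BV.s => n + 5 + 5 * (i - 1)
  | BV.d, BV.s => 6 * n + 1
  | BV.s, BV.s => 6 * n + 2
  | _, _ => 0

/-- One step of Bland's policy iteration with edge numbering `N`:
apply the improving switch with the smallest number. -/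
def IsBlandStep (n : ℕ) (N : BV → BV → ℕ) (π π' : BV → BV) : Prop :=
  ∃ u v, BImproving n π u v ∧ (∀ u' v', BImproving n π u' v' → N u v ≤ N u' v') ∧
    π' = Function.update π u v

/-- `BlandReaches n N π ψ` says that Bland's policy iteration started at `π` visits `ψ`. -/
def BlandReaches (n : ℕ) (N : BV → BV → ℕ) : (BV → BV) → (BV → BV) → Prop :=
  Relation.ReflTransGen (IsBlandStep n N)

/-- The canonical policy `π_0` for `0`: `travel 1`, `skip i` and `leave i` are active. -/
def pi0 (n : ℕ) : BV → BV := fun u =>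
  match u with
  | BV.t => BV.a 1
  | BV.a i => aN n (i + 1)
  | BV.b i => aN n (i + 1)
  | BV.d => BV.s
  | BV.s => BV.s

/-- The optimal policy `π_*`: `travel 1`, `enter i` for all `i`, `leave j` for `j < n`,
and `stay n` are active. -/
def piStar (n : ℕ) : BV → BV := fun u =>
  match u with
  | BV.t => BV.a 1
  | BV.a i => BV.b i
  | BV.b i => if i = n then BV.d else BV.a (i + 1)
  | BV.d => BV.s
  | BV.s => BV.s

/-! ## Bits and canonical policies -/

/-- The least significant set bit `ℓ_1(x)` (1-based). -/
noncomputable def lsb (x : ℕ) : ℕ := sInf {i | 1 ≤ i ∧ Nat.testBit x (i - 1)}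

/-- The most significant set bit `m(x)` (1-based). -/
noncomputable def msb1 (x : ℕ) : ℕ := sSup {i | 1 ≤ i ∧ Nat.testBit x (i - 1)}

/-- The least unset bit `ℓ_0(x)` (1-based). -/
noncomputable def lzero (x : ℕ) : ℕ := sInf {i | 1 ≤ i ∧ ¬ Nat.testBit x (i - 1)}

/-- `L_i(x) = max { j ≤ i-2 | x_j = 1 or j = 1 }` (1-based bits). -/
noncomputable def Lfun (i x : ℕ) : ℕ :=
  sSup {j | 1 ≤ j ∧ j ≤ i - 2 ∧ (Nat.testBit x (j - 1) ∨ j = 1)}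

/-- `IsCanonical n x π` says that `π` is the canonical policy `π_x` for `x`. -/
noncomputable def IsCanonical (n x : ℕ) (π : BV → BV) : Prop :=
  IsBPolicy n π ∧
  if x = 0 then
    π BV.t = BV.a 1 ∧
      ∀ i, 1 ≤ i → i ≤ n → π (BV.a i) = aN n (i + 1) ∧ π (BV.b i) = aN n (i + 1)
  else
    π BV.t = BV.a (lsb x) ∧
    π (BV.b (msb1 x)) = aN n (msb1 x + 1) ∧
    (∀ i, msb1 x < i → i ≤ n → π (BV.a i) = aN n (i + 1) ∧ π (BV.b i) = aN n (i + 1)) ∧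
    ∀ i, 1 ≤ i → i ≤ n → Nat.testBit x (i - 1) →
      π (BV.a i) = BV.b i ∧
      (i = 2 → π (BV.b 1) = BV.a 2 ∧ (¬ Nat.testBit x 0 → π (BV.a 1) = BV.a 2)) ∧
      (3 ≤ i → Nat.testBit x (i - 2) → π (BV.b (i - 1)) = BV.a i) ∧
      (3 ≤ i → ¬ Nat.testBit x (i - 2) →
        π (BV.b (i - 1)) = BV.b i ∧ π (BV.a (i - 1)) = BV.a i ∧
        π (BV.b (i - 2)) = BV.a (i - 1) ∧
        (Lfun i x < i - 2 →
          ∀ j, Lfun i x + 1 ≤ j → j ≤ i - 2 →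
            π (BV.a j) = BV.t ∧ π (BV.b (j - 1)) = BV.b j) ∧
        (Lfun i x = 1 → ¬ Nat.testBit x 0 → π (BV.a 1) = BV.t))

/-- Activating a list of edges in a policy, from left to right. -/
def activateList (π : BV → BV) (L : List (BV × BV)) : BV → BV :=
  L.foldl (fun σ e => Function.update σ e.1 e.2) π

/-- The canonical phases w.r.t. an odd number `x` (with `ℓ := ℓ_0(x)`), as a list of edges
to be activated in order. -/
noncomputable def phaseList (n x : ℕ) : List (BV × BV) :=
  let ℓ := lzero x
  (if Nat.testBit x ℓ then [(BV.b ℓ, aN n (ℓ + 1))] else []) ++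
  (if Nat.testBit x ℓ ∨ msb1 x < ℓ then [(BV.b (ℓ - 1), BV.b ℓ)] else []) ++
  [(BV.a ℓ, BV.b ℓ), (BV.t, BV.a ℓ)] ++
  ((List.range (ℓ - 2)).map fun j => (BV.a (j + 1), BV.t)) ++
  [(BV.a (ℓ - 1), BV.a ℓ)] ++
  (((List.range (ℓ - 3)).reverse).map fun j => (BV.b (j + 1), BV.b (j + 2))) ++
  (if ℓ = 2 then [(BV.b 1, BV.a 2)] else [])

/-! ## The Markov decision process `𝔇_n` -/

/-- Vertices of `𝔇_n`: the original vertices (`base`), and for every edge `(v,w)` of `𝔅_n`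
other than the self-loop, the gadget vertices `x v w`, `y v w`, `z v w`. -/
inductive DV : Type where
  | base : BV → DV
  | x : BV → BV → DV
  | y : BV → BV → DV
  | z : BV → BV → DV
deriving DecidableEq

/-- The edges of `𝔅_n` that get replaced by gadgets (all edges except the self-loop `(s,s)`). -/
def DEdgePair (n : ℕ) (v w : BV) : Prop := BEdge n v w ∧ v ≠ BV.s

/-- The vertex set of `𝔇_n`. -/
def IsDVertex (n : ℕ) : DV → Prop
  | DV.base v => IsBVertex n v
  | DV.x v w => DEdgePair n v w
  | DV.y v w => DEdgePair n v w
  | DV.z v w => DEdgePair n v w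

/-- The agent vertices of `𝔇_n` (all vertices except the randomization vertices `y v w`). -/
def IsDAgent (n : ℕ) : DV → Prop
  | DV.base v => IsBVertex n v
  | DV.x v w => DEdgePair n v w
  | DV.y _ _ => False
  | DV.z v w => DEdgePair n v w

/-- The agent edges of `𝔇_n`. -/
def DEdge (n : ℕ) (u u' : DV) : Prop :=
  (∃ v w, DEdgePair n v w ∧
    ((u = DV.base v ∧ u' = DV.x v w) ∨ (u = DV.x v w ∧ u' = DV.base v) ∨
     (u = DV.x v w ∧ u' = DV.y v w) ∨ (u = DV.z v w ∧ u' = DV.base w))) ∨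
  (u = DV.base BV.s ∧ u' = DV.base BV.s)

/-- The reward function of `𝔇_n`: the edge `(z v w, w)` carries the reward of the original
edge `(v,w)`; all other agent edges have reward `0`. -/
def rD (n : ℕ) (u u' : DV) : ℚ :=
  match u, u' with
  | DV.z v w, DV.base w' => if w' = w then rB n v w else 0
  | _, _ => 0

/-- A policy for `𝔇_n` chooses an outgoing agent edge at every agent vertex. -/
def IsDPolicy (n : ℕ) (π : DV → DV) : Prop := ∀ u, IsDAgent n u → DEdge n u (π u)

/-- `IsDVal n p π V` says that `V` satisfies the Bellman equations characterizing the value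
function of the policy `π` for `𝔇_n` with probabilities `p`, with `V s = 0`. -/
def IsDVal (n : ℕ) (p : BV → ℚ) (π : DV → DV) (V : DV → ℚ) : Prop :=
  V (DV.base BV.s) = 0 ∧
  (∀ u, IsDAgent n u → V u = rD n u (π u) + V (π u)) ∧
  (∀ v w, DEdgePair n v w →
    V (DV.y v w) = p v * V (DV.z v w) + (1 - p v) * V (DV.base v))

open Classical in
/-- The value function of a (weak unichain) policy `π` for `𝔇_n`: the unique solution of the
Bellman equations (normalized to `0` outside the vertex set). -/
noncomputable def DVal (n : ℕ) (p : BV → ℚ) (π : DV → DV) : DV → ℚ :=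
  if h : ∃! V : DV → ℚ, IsDVal n p π V ∧ ∀ u, ¬ IsDVertex n u → V u = 0 then
    h.exists.choose
  else fun _ => 0

/-- The reduced costs of an agent edge `(u,u')` of `𝔇_n` w.r.t. the policy `π`. -/
noncomputable def zD (n : ℕ) (p : BV → ℚ) (π : DV → DV) (u u' : DV) : ℚ :=
  rD n u u' + DVal n p π u' - DVal n p π u

/-- An agent edge of `𝔇_n` is an improving switch if its reduced costs are positive. -/
def DImproving (n : ℕ) (p : BV → ℚ) (π : DV → DV) (u u' : DV) : Prop :=
  DEdge n u u' ∧ 0 < zD n p π u u'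

/-- One (agent or positive-probability randomization) step of the process `𝔇_n` under `π`. -/
def DStep (n : ℕ) (p : BV → ℚ) (π : DV → DV) (u u' : DV) : Prop :=
  (IsDAgent n u ∧ u' = π u) ∨
  (∃ v w, DEdgePair n v w ∧ u = DV.y v w ∧
    ((u' = DV.z v w ∧ 0 < p v) ∨ (u' = DV.base v ∧ 0 < 1 - p v)))

/-- A policy for `𝔇_n` is weak unichain if it reaches `s` with probability one from every
vertex, i.e. `s` is reachable via active/positive-probability steps from every vertex. -/
def DWeakUnichain (n : ℕ) (p : BV → ℚ) (π : DV → DV) : Prop :=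
  ∀ u, IsDVertex n u → Relation.ReflTransGen (DStep n p π) u (DV.base BV.s)

/-- The twin policy of a policy `π` for `𝔅_n`: every vertex `v ≠ s` is `π v`-oriented. -/
def twin (π : BV → BV) : DV → DV := fun u =>
  match u with
  | DV.base v => if v = BV.s then DV.base BV.s else DV.x v (π v)
  | DV.x v w => if w = π v then DV.y v w else DV.base v
  | DV.y v w => DV.y v w
  | DV.z _ w => DV.base w

/-- The vertex numbering `𝒩_V` of `𝔅_n`: the order `(t, a 1, b 1, a 2, b 2, …, a n, b n, d, s)`. -/
def NV (n : ℕ) : BV → ℕ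
  | BV.t => 1
  | BV.a i => 2 * i
  | BV.b i => 2 * i + 1
  | BV.d => 2 * n + 2
  | BV.s => 2 * n + 3

/-- The specific probabilities `p_v = 2^{-𝒩_V(v)·(n+5)}`. -/
noncomputable def pSpec (n : ℕ) (v : BV) : ℚ := (2 : ℚ) ^ (-((NV n v * (n + 5) : ℕ) : ℤ))

/-- The set `B(v)` of agent edges of `𝔇_n` belonging to the vertex `v`. -/
def Belongs (n : ℕ) (v : BV) (e : DV × DV) : Prop :=
  ∃ w, DEdgePair n v w ∧
    (e = (DV.x v w, DV.y v w) ∨ e = (DV.base v, DV.x v w) ∨ e = (DV.x v w, DV.base v))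

/-- Applying the improving switch `e` to the policy `π` yields `π'`. -/
def DApply (n : ℕ) (p : BV → ℚ) (π : DV → DV) (e : DV × DV) (π' : DV → DV) : Prop :=
  DImproving n p π e.1 e.2 ∧ π' = Function.update π e.1 e.2

/-- One step of Bland's policy iteration on `𝔇_n` with edge numbering `N`. -/
def IsBlandStepD (n : ℕ) (p : BV → ℚ) (N : DV → DV → ℕ) (π π' : DV → DV) : Prop :=
  ∃ u u', DImproving n p π u u' ∧ (∀ a b, DImproving n p π a b → N u u' ≤ N a b) ∧
    π' = Function.update π u u'

/-- One step of Dantzig's policy iteration on `𝔇_n`: apply an improving switch of maximal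
reduced costs. -/
def DantzigStep (n : ℕ) (p : BV → ℚ) (π π' : DV → DV) : Prop :=
  ∃ u u', DImproving n p π u u' ∧
    (∀ a b, DImproving n p π a b → zD n p π a b ≤ zD n p π u u') ∧
    π' = Function.update π u u'

/-- The finite set of vertices of `𝔅_n`, as a `Finset`. -/
noncomputable def BVSet (n : ℕ) : Finset BV :=
  {BV.t, BV.d, BV.s} ∪ (Finset.Icc 1 n).image BV.a ∪ (Finset.Icc 1 n).image BV.b

/-- The finite set of agent vertices of `𝔇_n`, as a `Finset`. -/
noncomputable def DAgentSet (n : ℕ) : Finset DV := by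
  classical
  exact ((BVSet n).image DV.base) ∪
    (((BVSet n ×ˢ BVSet n).filter fun e => DEdgePair n e.1 e.2).image fun e => DV.x e.1 e.2) ∪
    (((BVSet n ×ˢ BVSet n).filter fun e => DEdgePair n e.1 e.2).image fun e => DV.z e.1 e.2)

/-- The objective of the Largest Increase rule: the sum of the values of all agent vertices. -/
noncomputable def LIobj (n : ℕ) (p : BV → ℚ) (π : DV → DV) : ℚ :=
  ∑ u ∈ DAgentSet n, DVal n p π u

/-- One step of the Largest Increase policy iteration on `𝔇_n`: apply an improving switch
maximizing the sum of all agent vertex values of the resulting policy. -/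
def LIStep (n : ℕ) (p : BV → ℚ) (π π' : DV → DV) : Prop :=
  ∃ u u', DImproving n p π u u' ∧
    (∀ a b, DImproving n p π a b →
      LIobj n p (Function.update π a b) ≤ LIobj n p (Function.update π u u')) ∧
    π' = Function.update π u u'

/-- `N` is a Bland numbering `𝒩_{𝔇_n}` for `𝔇_n`: it is injective on agent edges, the edges
`(x v w, v)` all come first, within each gadget `(x v w, y v w)` precedes `(v, x v w)`,
the gadget blocks are ordered according to `𝒩_{𝔅_n}`, and the self-loop comes last. -/
def IsDBlandNumbering (n : ℕ) (N : DV → DV → ℕ) : Prop :=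
  (∀ u₁ u₂ u₁' u₂', DEdge n u₁ u₂ → DEdge n u₁' u₂' → N u₁ u₂ = N u₁' u₂' →
    u₁ = u₁' ∧ u₂ = u₂') ∧
  (∀ v w v' w', DEdgePair n v w → DEdgePair n v' w' →
    N (DV.x v w) (DV.base v) < N (DV.x v' w') (DV.y v' w')) ∧
  (∀ v w, DEdgePair n v w → N (DV.x v w) (DV.y v w) < N (DV.base v) (DV.x v w)) ∧
  (∀ v w v' w', DEdgePair n v w → DEdgePair n v' w' → NB n v w < NB n v' w' →
    N (DV.base v) (DV.x v w) < N (DV.x v' w') (DV.y v' w')) ∧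
  (∀ v w, DEdgePair n v w → N (DV.base v) (DV.x v w) < N (DV.base BV.s) (DV.base BV.s))

/-! For any solution of the Bellman equations of the twin policy, `x v w` is worth as much as `v`
and `z v w` as much as traversing `(v, w)`, so every edge other than `(x v w, y v w)` has reduced
cost zero. It remains to see that the value function of the twin policy is such a solution, i.e.
that the solution is unique. The randomization vertex of the `π v`-oriented gadget sends the process
back to `v` with probability `1 - p v`, but since `p v ≠ 0` this factor cancels and passing the
gadget is worth exactly what the edge `(v, π v)` is worth in `𝔅_n`. Following the path of `π` to
the sink then expresses all values through `BVal n π`. -/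

section Vertices

variable {n : ℕ} {v w : BV}

lemma isBVertex_aN_succ {i : ℕ} (hi : i ≤ n) : IsBVertex n (aN n (i + 1)) := by
  unfold aN
  split_ifs with h
  · trivial
  · exact ⟨by omega, by omega⟩

lemma isBVertex_bN_succ {i : ℕ} (hi : i ≤ n) : IsBVertex n (bN n (i + 1)) := by
  unfold bN
  split_ifs with h
  · trivial
  · exact ⟨by omega, by omega⟩

lemma BEdge.isBVertex_left (h : BEdge n v w) : IsBVertex n v := by
  rcases h with ⟨i, _, _, rfl, -⟩ | ⟨i, _, _, rfl, -⟩ | ⟨i, _, _, rfl, -⟩ |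
    ⟨i, _, _, rfl, -⟩ | ⟨i, _, _, rfl, -⟩ | ⟨i, _, _, rfl, -⟩ | ⟨rfl, -⟩ | ⟨rfl, -⟩
  all_goals trivial

lemma BEdge.isBVertex_right (h : BEdge n v w) : IsBVertex n w := by
  rcases h with ⟨i, _, _, -, rfl⟩ | ⟨i, _, _, -, rfl⟩ | ⟨i, -, hn, -, rfl⟩ |
    ⟨-, -, -, -, rfl⟩ | ⟨i, -, hn, -, rfl⟩ | ⟨i, -, hn, -, rfl⟩ | ⟨-, rfl⟩ | ⟨-, rfl⟩
  all_goals first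
    | trivial
    | exact isBVertex_aN_succ hn
    | exact isBVertex_bN_succ hn

lemma IsDAgent.isDVertex {u : DV} (h : IsDAgent n u) : IsDVertex n u := by
  cases u with
  | y v w => exact h.elim
  | _ => exact h

lemma DEdge.isDVertex_right {u u' : DV} (h : DEdge n u u') : IsDVertex n u' := by
  rcases h with ⟨v, w, he, ⟨-, rfl⟩ | ⟨-, rfl⟩ | ⟨-, rfl⟩ | ⟨-, rfl⟩⟩ | ⟨-, rfl⟩
  · exact he
  · exact he.1.isBVertex_left
  · exact he
  · exact he.1.isBVertex_right
  · trivial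

end Vertices

section BVal

variable (n : ℕ) (π : BV → BV)

lemma BVal_s : BVal n π BV.s = 0 := by
  have h : ∃ k, π^[k] BV.s = BV.s := ⟨0, rfl⟩
  rw [BVal, dif_pos h, (Nat.find_eq_zero h).2 rfl, Finset.sum_range_zero]

lemma BVal_eq_rB_add_BVal {v : BV} (hs : v ≠ BV.s) (h : ∃ k, π^[k] v = BV.s) :
    BVal n π v = rB n v (π v) + BVal n π (π v) := by
  have h' : ∃ k, π^[k] (π v) = BV.s := by
    obtain ⟨_ | k, hk⟩ := h
    exacts [absurd hk hs, ⟨k, hk⟩]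
  rw [BVal, BVal, dif_pos h, dif_pos h', Nat.find_comp_succ h h' hs, Finset.sum_range_succ',
    add_comm]
  rfl

end BVal

section ValueFunctions

variable {n : ℕ} {p : BV → ℚ} {σ : DV → DV} {V W : DV → ℚ}

lemma IsDVal.congr (hσ : IsDPolicy n σ) (hV : IsDVal n p σ V)
    (hW : ∀ u, IsDVertex n u → W u = V u) : IsDVal n p σ W := by
  obtain ⟨hs, hagent, hrand⟩ := hV
  refine ⟨?_, fun u hu ↦ ?_, fun v w he ↦ ?_⟩
  · rw [hW (DV.base BV.s) trivial, hs]
  · rw [hW u hu.isDVertex, hW (σ u) (hσ u hu).isDVertex_right, hagent u hu]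
  · rw [hW (DV.y v w) he, hW (DV.z v w) he, hW (DV.base v) he.1.isBVertex_left, hrand v w he]

lemma isDVal_DVal_of_unique (hσ : IsDPolicy n σ) (hV : IsDVal n p σ V)
    (huniq : ∀ W, IsDVal n p σ W → ∀ u, IsDVertex n u → W u = V u) :
    IsDVal n p σ (DVal n p σ) := by
  classical
  have hex : ∃! W : DV → ℚ, IsDVal n p σ W ∧ ∀ u, ¬ IsDVertex n u → W u = 0 := by
    refine ⟨fun u ↦ if IsDVertex n u then V u else 0,
      ⟨hV.congr hσ fun u hu ↦ if_pos hu, fun u hu ↦ if_neg hu⟩, ?_⟩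
    rintro W ⟨hW, hW₀⟩
    funext u
    split_ifs with hu
    exacts [huniq W hW u hu, hW₀ u hu]
  rw [DVal, dif_pos hex]
  exact hex.exists.choose_spec.1

end ValueFunctions

section Twin

variable {n : ℕ} {p : BV → ℚ} {π : BV → BV} {V : DV → ℚ} {v w : BV}

lemma isDPolicy_twin (hπ : IsBPolicy n π) : IsDPolicy n (twin π) := by
  intro u hu
  cases u with
  | base v =>
    by_cases hs : v = BV.s
    · exact Or.inr ⟨by rw [hs], by simp only [twin, if_pos hs]⟩
    · exact Or.inl ⟨v, π v, ⟨hπ v hu, hs⟩, Or.inl ⟨rfl, by simp only [twin, if_neg hs]⟩⟩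
  | x v w =>
    refine Or.inl ⟨v, w, hu, ?_⟩
    by_cases hw : w = π v <;> simp [twin, hw]
  | y v w => exact hu.elim
  | z v w => exact Or.inl ⟨v, w, hu, Or.inr (Or.inr (Or.inr ⟨rfl, rfl⟩))⟩

namespace IsDVal

lemma z_eq_rB_add_base (hV : IsDVal n p (twin π) V) (he : DEdgePair n v w) :
    V (DV.z v w) = rB n v w + V (DV.base w) := by
  simpa only [twin, rD, if_true] using hV.2.1 (DV.z v w) he

lemma x_eq_base (hV : IsDVal n p (twin π) V) (he : DEdgePair n v w) :
    V (DV.x v w) = V (DV.base v) := by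
  by_cases hw : w = π v
  · subst hw
    have hbase := hV.2.1 (DV.base v) he.1.isBVertex_left
    simp only [twin, rD, if_neg he.2, zero_add] at hbase
    exact hbase.symm
  · simpa only [twin, rD, if_neg hw, zero_add] using hV.2.1 (DV.x v w) he

lemma x_eq_y (hV : IsDVal n p (twin π) V) (he : DEdgePair n v (π v)) :
    V (DV.x v (π v)) = V (DV.y v (π v)) := by
  simpa only [twin, rD, if_true, zero_add] using hV.2.1 (DV.x v (π v)) he

lemma base_eq_rB_add_base (hV : IsDVal n p (twin π) V) (he : DEdgePair n v (π v))
    (hp : p v ≠ 0) : V (DV.base v) = rB n v (π v) + V (DV.base (π v)) := by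
  have hloop : V (DV.base v) =
      p v * (rB n v (π v) + V (DV.base (π v))) + (1 - p v) * V (DV.base v) := by
    rw [← hV.z_eq_rB_add_base he, ← hV.2.2 v (π v) he, ← hV.x_eq_y he, hV.x_eq_base he]
  exact mul_left_cancel₀ hp (by linear_combination hloop)

lemma base_eq_BVal (hp : ∀ v, IsBVertex n v → v ≠ BV.s → p v ≠ 0) (hπ : IsBPolicy n π)
    (hV : IsDVal n p (twin π) V) (hv : IsBVertex n v) (h : ∃ k, π^[k] v = BV.s) :
    V (DV.base v) = BVal n π v := by
  obtain ⟨k, hk⟩ := h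
  induction k generalizing v with
  | zero =>
    obtain rfl : v = BV.s := hk
    rw [hV.1, BVal_s]
  | succ k ih =>
    by_cases hs : v = BV.s
    · rw [hs, hV.1, BVal_s]
    · rw [hV.base_eq_rB_add_base ⟨hπ v hv, hs⟩ (hp v hv hs), ih (hπ v hv).isBVertex_right hk,
        BVal_eq_rB_add_BVal n π hs ⟨k + 1, hk⟩]

end IsDVal

/-- The value function of the twin policy of `π`, expressed through the values of `π` in `𝔅_n`.
It is not normalized to `0` outside the vertex set of `𝔇_n`. -/
noncomputable def twinVal (n : ℕ) (p : BV → ℚ) (π : BV → BV) : DV → ℚ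
  | DV.base v => BVal n π v
  | DV.x v _ => BVal n π v
  | DV.y v w => p v * (rB n v w + BVal n π w) + (1 - p v) * BVal n π v
  | DV.z v w => rB n v w + BVal n π w

lemma isDVal_twinVal (hwu : BWeakUnichain n π) : IsDVal n p (twin π) (twinVal n p π) := by
  refine ⟨BVal_s n π, fun u hu ↦ ?_, fun v w _ ↦ rfl⟩
  cases u with
  | base v => by_cases hs : v = BV.s <;> simp [twin, rD, twinVal, hs]
  | x v w =>
    by_cases hw : w = π v
    · have hval := BVal_eq_rB_add_BVal n π hu.2 (hwu v hu.1.isBVertex_left)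
      simp only [twin, rD, if_pos hw, twinVal]
      rw [hw, ← hval]
      ring
    · simp only [twin, rD, if_neg hw, twinVal, zero_add]
  | y v w => exact hu.elim
  | z v w => simp only [twin, rD, twinVal, if_true]

lemma IsDVal.eq_twinVal (hp : ∀ v, IsBVertex n v → v ≠ BV.s → p v ≠ 0) (hπ : IsBPolicy n π)
    (hwu : BWeakUnichain n π) (hV : IsDVal n p (twin π) V) (u : DV) (hu : IsDVertex n u) :
    V u = twinVal n p π u := by
  have hbase : ∀ v, IsBVertex n v → V (DV.base v) = BVal n π v :=
    fun v hv ↦ hV.base_eq_BVal hp hπ hv (hwu v hv)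
  cases u with
  | base v => exact hbase v hu
  | x v w => rw [hV.x_eq_base hu, hbase v hu.1.isBVertex_left, twinVal]
  | y v w =>
    rw [hV.2.2 v w hu, hV.z_eq_rB_add_base hu, hbase v hu.1.isBVertex_left,
      hbase w hu.1.isBVertex_right, twinVal]
  | z v w => rw [hV.z_eq_rB_add_base hu, hbase w hu.1.isBVertex_right, twinVal]

theorem isDVal_DVal_twin (hp : ∀ v, IsBVertex n v → v ≠ BV.s → p v ≠ 0) (hπ : IsBPolicy n π)
    (hwu : BWeakUnichain n π) : IsDVal n p (twin π) (DVal n p (twin π)) :=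
  isDVal_DVal_of_unique (isDPolicy_twin hπ) (isDVal_twinVal hwu)
    fun _ hW ↦ hW.eq_twinVal hp hπ hwu

end Twin

/-- Every improving switch for the twin policy of a weak unichain policy for `𝔅_n` is of
the form `(x v w, y v w)` for some edge `(v,w)` of `𝔅_n`. -/
theorem stmt11 (n : ℕ) (hn : 1 ≤ n) (p : BV → ℚ)
    (hp : ∀ v, IsBVertex n v → v ≠ BV.s → 0 < p v ∧ p v ≤ 1)
    (π : BV → BV) (hπ : IsBPolicy n π) (hwu : BWeakUnichain n π)
    (u u' : DV) (himp : DImproving n p (twin π) u u') :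
    ∃ v w, DEdgePair n v w ∧ u = DV.x v w ∧ u' = DV.y v w := by
  have hV : IsDVal n p (twin π) (DVal n p (twin π)) :=
    isDVal_DVal_twin (fun v hv hs ↦ (hp v hv hs).1.ne') hπ hwu
  obtain ⟨hedge, hpos⟩ := himp
  rcases hedge with ⟨v, w, he, ⟨rfl, rfl⟩ | ⟨rfl, rfl⟩ | hxy | ⟨rfl, rfl⟩⟩ | ⟨rfl, rfl⟩
  · simp [zD, rD, hV.x_eq_base he] at hpos
  · simp [zD, rD, hV.x_eq_base he] at hpos
  · exact ⟨v, w, he, hxy⟩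
  · simp [zD, rD, hV.z_eq_rB_add_base he] at hpos
  · simp [zD, rD] at hpos
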